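/- arXiv:1807.07888 — 2 statements merged into one kernel-verified Lean document; each statement's English description precedes it below -/
import Mathlib

section
/- Let (E, ∇) be a flat connection on F₁ = k((t)), char k = 0, E finite-dimensional over F₁. Then coker(∇: E → E ⊗ Ω¹_{F₁}) is a finite-dimensional k-vector space. -/
/-!
Write `θ = t∇`. Modulo the image of `∇`, integration by parts moves `θ` off a vector `e`:
`f • θ e` becomes `S f • e`, where `S = -(d/dt) ∘ t` multiplies the coefficient of `t ^ j` by
`-(j + 1)`. By finite-dimensionality the vectors `e, θ e, θ² e, …` satisfy a relation
`∑ aᵢ θⁱ e = 0`, whose coefficients may be taken to be power series that do not all vanish at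
`t = 0`. Hence `f ↦ f • e` kills the image of the operator `L = ∑ Sⁱ aᵢ`. On
`t ^ m k⟦t⟧ / t ^ (m + 1) k⟦t⟧` this `L` acts as the scalar `∑ aᵢ(0) (-(m + 1))ⁱ`, which is nonzero
for all but finitely many `m`. Adding the finite-rank operator that acts as the identity in these
exceptional degrees makes every scalar invertible, hence `L` surjective by successive
approximation; so the image of `L` has finite codimension.
-/

open scoped Polynomial PowerSeries

section PrimitiveRelation

variable {R K : Type*} [CommRing R] [IsDomain R] [UniqueFactorizationMonoid R]
  [Field K] [Algebra R K] [IsFractionRing R K]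

theorem exists_isPrimitive_map_eq_smul {p : K[X]} (hp : p ≠ 0) :
    ∃ q : R[X], q.IsPrimitive ∧ ∃ c : K, q.map (algebraMap R K) = c • p := by
  let _ : StrongNormalizationMonoid R := UniqueFactorizationMonoid.strongNormalizationMonoid
  let _ : NormalizedGCDMonoid R := UniqueFactorizationMonoid.toNormalizedGCDMonoid R
  obtain ⟨b, -, hb⟩ := IsLocalization.integerNormalization_spec (nonZeroDivisors R) p
  set q := IsLocalization.integerNormalization (nonZeroDivisors R) p with hq
  have hcontent : algebraMap R K q.content ≠ 0 := by
    rwa [map_ne_zero_iff _ (IsFractionRing.injective R K), Ne, Polynomial.content_eq_zero_iff, hq,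
      IsFractionRing.integerNormalization_eq_zero_iff]
  refine ⟨q.primPart, q.isPrimitive_primPart, (algebraMap R K q.content)⁻¹ * algebraMap R K b, ?_⟩
  rw [mul_smul, eq_inv_smul_iff₀ hcontent, algebraMap_smul K b, ← hb, ← Polynomial.C_mul',
    ← Polynomial.map_C, ← Polynomial.map_mul, ← q.eq_C_content_mul_primPart]

theorem exists_isPrimitive_sum_smul_eq_zero {E : Type*} [AddCommGroup E] [Module K E]
    [FiniteDimensional K E] (u : ℕ → E) :
    ∃ q : R[X], q.IsPrimitive ∧ ∑ i ∈ q.support, algebraMap R K (q.coeff i) • u i = 0 := by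
  let φ : K[X] →ₗ[K] E := (Polynomial.basisMonomials K).constr K u
  have hφ (p : K[X]) : φ p = ∑ i ∈ p.support, p.coeff i • u i := by
    rw [Module.Basis.constr_apply]; rfl
  have hφ_inj : ¬ Function.Injective φ := fun h =>
    Polynomial.not_finite (Module.Finite.of_injective φ h)
  obtain ⟨p, hφp, hp⟩ : ∃ p, φ p = 0 ∧ p ≠ 0 := by
    simpa [injective_iff_map_eq_zero] using hφ_inj
  obtain ⟨q, hq, c, hqp⟩ := exists_isPrimitive_map_eq_smul (R := R) hp
  have hφq : φ (q.map (algebraMap R K)) = 0 := by rw [hqp, map_smul, hφp, smul_zero]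
  refine ⟨q, hq, ?_⟩
  simpa only [hφ, Polynomial.coeff_map,
    Polynomial.support_map_of_injective q (IsFractionRing.injective R K)] using hφq

end PrimitiveRelation

section LaurentSeries

variable {R : Type*} [CommRing R]

theorem map_constantCoeff_ne_zero_of_isPrimitive [Nontrivial R] {q : R⟦X⟧[X]}
    (hq : q.IsPrimitive) : q.map PowerSeries.constantCoeff ≠ 0 := by
  intro h
  have hdvd : Polynomial.C PowerSeries.X ∣ q := by
    refine (Polynomial.C_dvd_iff_dvd_coeff _ _).2 fun i => ?_
    rw [PowerSeries.X_dvd_iff, ← Polynomial.coeff_map, h, Polynomial.coeff_zero]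
  simpa [PowerSeries.isUnit_iff_constantCoeff] using hq _ hdvd

-- Instance search equips `LaurentSeries R` with the algebra structure induced from `R⟦X⟧`, whose
-- scalar action is not reducibly the coefficientwise one.
instance smulCommClass_laurentSeries : SMulCommClass R (LaurentSeries R) (LaurentSeries R) :=
  @Algebra.to_smulCommClass R (LaurentSeries R) _ _ HahnSeries.instAlgebra

variable (R) in
/-- The `R`-submodule `t ^ m R⟦t⟧` of `R((t))`. -/
def orderFiltration (m : ℤ) : Submodule R (LaurentSeries R) where
  carrier := {g | ∀ j < m, g.coeff j = 0}
  add_mem' ha hb j hj := by rw [HahnSeries.coeff_add, ha j hj, hb j hj, add_zero]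
  zero_mem' _ _ := rfl
  smul_mem' c a ha j hj := by rw [HahnSeries.coeff_smul, ha j hj, smul_zero]

theorem orderFiltration_antitone : Antitone (orderFiltration R) :=
  fun _ _ hmn _ hg j hj => hg j (hj.trans_le hmn)

theorem mem_orderFiltration_order (g : LaurentSeries R) : g ∈ orderFiltration R g.order :=
  fun _ hj => HahnSeries.coeff_eq_zero_of_lt_order hj

theorem mul_mem_orderFiltration_add {m n : ℤ} {f g : LaurentSeries R}
    (hf : f ∈ orderFiltration R m) (hg : g ∈ orderFiltration R n) :
    f * g ∈ orderFiltration R (m + n) := by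
  intro j hj
  rw [HahnSeries.coeff_mul]
  refine Finset.sum_eq_zero fun ⟨a, b⟩ hab => ?_
  have hab : a + b = j := (Finset.mem_antidiagonal.1 hab).2.2
  obtain ha | hb : a < m ∨ b < n := by omega
  · rw [hf a ha, zero_mul]
  · rw [hg b hb, mul_zero]

theorem algebraMap_mul_sub_smul_mem_orderFiltration (a : R⟦X⟧) {m : ℤ} {g : LaurentSeries R}
    (hg : g ∈ orderFiltration R m) :
    algebraMap R⟦X⟧ (LaurentSeries R) a * g - PowerSeries.constantCoeff a • g ∈
      orderFiltration R (m + 1) := by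
  have ha : algebraMap R⟦X⟧ (LaurentSeries R) a - HahnSeries.C (PowerSeries.constantCoeff a) ∈
      orderFiltration R 1 := by
    intro j hj
    obtain hj | rfl : j < 0 ∨ j = 0 := by omega
    · simp [PowerSeries.coeff_coe, hj, HahnSeries.coeff_single_of_ne hj.ne]
    · simp [PowerSeries.coeff_coe]
  rw [← HahnSeries.C_mul_eq_smul, ← sub_mul, add_comm]
  exact mul_mem_orderFiltration_add ha hg

/-- An endomorphism of `R((t))` is degree raising if it maps `t ^ m R⟦t⟧` into `t ^ (m + 1) R⟦t⟧`
for all `m`. -/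
def IsDegreeRaising (N : Module.End R (LaurentSeries R)) : Prop :=
  ∀ m, ∀ g ∈ orderFiltration R m, N g ∈ orderFiltration R (m + 1)

namespace IsDegreeRaising

variable {N : Module.End R (LaurentSeries R)}

theorem pow_mem (hN : IsDegreeRaising N) {m : ℤ} {g : LaurentSeries R}
    (hg : g ∈ orderFiltration R m) (n : ℕ) : (N ^ n) g ∈ orderFiltration R (m + n) := by
  induction n with
  | zero => simpa using hg
  | succ n ih =>
    rw [pow_succ', Module.End.mul_apply, Nat.cast_succ, ← add_assoc]
    exact hN _ _ ih

theorem exists_sub_sum_pow_mem (hN : IsDegreeRaising N) {m : ℤ} {h : LaurentSeries R}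
    (hh : h ∈ orderFiltration R m) :
    ∃ g, ∀ n : ℕ, g - ∑ i ∈ Finset.range n, (N ^ i) h ∈ orderFiltration R (m + n) := by
  have hpow_coeff {i : ℕ} {j : ℤ} (hj : j < m + i) : ((N ^ i) h).coeff j = 0 :=
    hN.pow_mem hh i j hj
  let s : HahnSeries.SummableFamily ℤ R ℕ :=
    { toFun i := (N ^ i) h
      isPWO_iUnion_support' := by
        refine (BddBelow.isWF ⟨m, fun j hj => ?_⟩).isPWO
        obtain ⟨i, hi⟩ := Set.mem_iUnion.1 hj
        by_contra! hjm
        exact hi (hpow_coeff (by omega))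
      finite_co_support' j := by
        refine (Set.finite_lt_nat (j - m + 1).toNat).subset fun i hi => ?_
        by_contra hij
        rw [Set.mem_ofPred_eq, not_lt] at hij
        exact hi (hpow_coeff (by omega)) }
  refine ⟨s.hsum, fun n j hj => ?_⟩
  rw [HahnSeries.coeff_sub, HahnSeries.SummableFamily.coeff_hsum, HahnSeries.coeff_sum, sub_eq_zero]
  refine finsum_eq_sum_of_support_subset _ fun i hi => ?_
  by_contra hin
  rw [Finset.mem_coe, Finset.mem_range] at hin
  exact hi (hpow_coeff (by omega))

theorem surjective_one_sub (hN : IsDegreeRaising N) :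
    Function.Surjective (1 - N : Module.End R (LaurentSeries R)) := by
  intro h
  obtain ⟨g, hg⟩ := hN.exists_sub_sum_pow_mem (mem_orderFiltration_order h)
  refine ⟨g, sub_eq_zero.1 (HahnSeries.ext (funext fun j => ?_))⟩
  set n := (j - h.order + 1).toNat
  set r := g - ∑ i ∈ Finset.range n, (N ^ i) h with hr
  have hgeom : (1 - N) (∑ i ∈ Finset.range n, (N ^ i) h) = h - (N ^ n) h := by
    simpa using LinearMap.congr_fun (mul_neg_geom_sum N n) h
  have hsplit : (1 - N) g - h = r - N r - (N ^ n) h := by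
    rw [← sub_add_cancel g (∑ i ∈ Finset.range n, (N ^ i) h), ← hr, map_add, hgeom,
      LinearMap.sub_apply, Module.End.one_apply]
    abel
  have hNr : N r ∈ orderFiltration R (h.order + n) :=
    orderFiltration_antitone (by omega) (hN _ r (hg n))
  have hmem : (1 - N) g - h ∈ orderFiltration R (h.order + n) := by
    rw [hsplit]
    exact sub_mem (sub_mem (hg n) hNr) (hN.pow_mem (mem_orderFiltration_order h) n)
  exact hmem j (by omega)

end IsDegreeRaising

/-- The endomorphism of `R((t))` multiplying the coefficient of `t ^ j` by `w j`. -/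
def coeffScale (w : ℤ → R) : Module.End R (LaurentSeries R) where
  toFun g := ⟨fun j => w j * g.coeff j,
    g.isPWO_support.mono fun _ hj => right_ne_zero_of_mul hj⟩
  map_add' f g := by ext j; exact mul_add _ _ _
  map_smul' c g := by ext j; exact mul_left_comm _ _ _

@[simp]
theorem coeff_coeffScale (w : ℤ → R) (g : LaurentSeries R) (j : ℤ) :
    (coeffScale w g).coeff j = w j * g.coeff j := rfl

theorem coeffScale_mul (v w : ℤ → R) : coeffScale (v * w) = coeffScale v * coeffScale w := by
  ext g j
  exact mul_assoc _ _ _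

theorem coeffScale_one : coeffScale (1 : ℤ → R) = 1 := by
  ext g j
  exact one_mul _

theorem coeffScale_mem_orderFiltration (w : ℤ → R) {m : ℤ} {g : LaurentSeries R}
    (hg : g ∈ orderFiltration R m) : coeffScale w g ∈ orderFiltration R m :=
  fun j hj => by rw [coeff_coeffScale, hg j hj, mul_zero]

theorem surjective_of_isDegreeRaising_sub_coeffScale {L : Module.End R (LaurentSeries R)}
    (w : (ℤ → R)ˣ) (hL : IsDegreeRaising (L - coeffScale w)) : Function.Surjective L := by
  set S : Module.End R (LaurentSeries R) := coeffScale ↑w⁻¹ with hS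
  have hN : IsDegreeRaising (-((L - coeffScale w) * S)) := fun m g hg =>
    neg_mem (hL m _ (coeffScale_mem_orderFiltration _ hg))
  have hfactor : 1 - -((L - coeffScale w) * S) = L * S := by
    rw [sub_mul, hS, ← coeffScale_mul, w.mul_inv, coeffScale_one]
    abel
  have hsurj : Function.Surjective (L * S) := hfactor ▸ hN.surjective_one_sub
  exact Function.Surjective.of_comp hsurj

theorem coeffScale_single (w : ℤ → R) (j : ℤ) (r : R) :
    coeffScale w (HahnSeries.single j r) = HahnSeries.single j (w j * r) := by
  ext i
  obtain rfl | hij := eq_or_ne i j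
  · simp
  · simp [HahnSeries.coeff_single_of_ne hij]

theorem finite_range_coeffScale {w : ℤ → R} (hw : w.support.Finite) :
    Module.Finite R (LinearMap.range (coeffScale w)) := by
  have hspan : LinearMap.range (coeffScale w) =
      Submodule.span R ((fun j => coeffScale w (HahnSeries.single j 1)) '' w.support) := by
    refine le_antisymm ?_ (Submodule.span_le.2 ?_)
    · rintro _ ⟨g, rfl⟩
      have hg : coeffScale w g =
          ∑ j ∈ hw.toFinset, g.coeff j • coeffScale w (HahnSeries.single j 1) := by
        ext i
        simp +contextual [coeffScale_single, HahnSeries.coeff_single, mul_comm (g.coeff i)]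
      rw [hg]
      exact Submodule.sum_mem _ fun j hj => Submodule.smul_mem _ _
        (Submodule.subset_span ⟨j, hw.mem_toFinset.1 hj, rfl⟩)
    · rintro _ ⟨j, -, rfl⟩
      exact LinearMap.mem_range_self _ _
  rw [hspan, Module.Finite.iff_fg]
  exact Submodule.fg_span (hw.image _)

theorem finite_quotient_range_of_isDegreeRaising_sub_coeffScale {k : Type*} [Field k]
    {L : Module.End k (LaurentSeries k)} {w : ℤ → k} (hL : IsDegreeRaising (L - coeffScale w))
    (hw : {j | w j = 0}.Finite) : Module.Finite k (LaurentSeries k ⧸ LinearMap.range L) := by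
  classical
  let v : ℤ → k := {j | w j = 0}.indicator 1
  have hv : Module.Finite k (LinearMap.range (coeffScale v)) :=
    finite_range_coeffScale (hw.subset Set.support_indicator_subset)
  have hwv : IsUnit (w + v) := by
    refine Pi.isUnit_iff.2 fun j => isUnit_iff_ne_zero.2 ?_
    by_cases hj : w j = 0 <;> simp [v, hj]
  have hsurj : Function.Surjective (L + coeffScale v) := by
    refine surjective_of_isDegreeRaising_sub_coeffScale hwv.unit ?_
    have hadd : coeffScale (w + v) = coeffScale w + coeffScale v := by
      ext g j
      exact add_mul _ _ _
    rwa [IsUnit.unit_spec, hadd, add_sub_add_right_eq_sub]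
  refine Module.Finite.of_surjective
    ((LinearMap.range L).mkQ ∘ₗ (LinearMap.range (coeffScale v)).subtype) fun x => ?_
  obtain ⟨f, rfl⟩ := (LinearMap.range L).mkQ_surjective x
  obtain ⟨g, rfl⟩ := hsurj f
  refine ⟨⟨coeffScale v g, LinearMap.mem_range_self _ _⟩, ?_⟩
  simp [(Submodule.Quotient.mk_eq_zero (LinearMap.range L)).2 (LinearMap.mem_range_self L g)]

/-- For `q = ∑ aᵢ Xⁱ`, the operator `g ↦ ∑ Sⁱ (aᵢ g)` on `R((t))`, where `S` is `coeffScale w`.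
If `S` is the formal adjoint of `θ`, this is the formal adjoint of `∑ aᵢ θⁱ`. -/
noncomputable def scaleAdjoint (w : ℤ → R) (q : R⟦X⟧[X]) : Module.End R (LaurentSeries R) :=
  ∑ i ∈ q.support, coeffScale (w ^ i) *
    LinearMap.mulLeft R (algebraMap R⟦X⟧ (LaurentSeries R) (q.coeff i))

theorem scaleAdjoint_apply (w : ℤ → R) (q : R⟦X⟧[X]) (g : LaurentSeries R) :
    scaleAdjoint w q g = ∑ i ∈ q.support,
      coeffScale (w ^ i) (algebraMap R⟦X⟧ (LaurentSeries R) (q.coeff i) * g) := by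
  simp [scaleAdjoint, LinearMap.sum_apply]

theorem isDegreeRaising_scaleAdjoint_sub_coeffScale (w : ℤ → R) (q : R⟦X⟧[X]) :
    IsDegreeRaising (scaleAdjoint w q -
      coeffScale fun j => (q.map PowerSeries.constantCoeff).eval (w j)) := by
  intro m g hg
  have hsymbol : coeffScale (fun j => (q.map PowerSeries.constantCoeff).eval (w j)) g =
      ∑ i ∈ q.support, coeffScale (w ^ i) (PowerSeries.constantCoeff (q.coeff i) • g) := by
    ext j
    simp [Polynomial.eval_map, Polynomial.eval₂_eq_sum, Polynomial.sum_def, Finset.sum_mul,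
      mul_assoc, mul_left_comm]
  rw [LinearMap.sub_apply, scaleAdjoint_apply, hsymbol, ← Finset.sum_sub_distrib]
  refine sum_mem fun i _ => ?_
  rw [← map_sub]
  exact coeffScale_mem_orderFiltration _ (algebraMap_mul_sub_smul_mem_orderFiltration _ hg)

theorem finite_quotient_range_scaleAdjoint {k : Type*} [Field k] {w : ℤ → k}
    (hw : Function.Injective w) {q : k⟦X⟧[X]} (hq : q.IsPrimitive) :
    Module.Finite k (LaurentSeries k ⧸ LinearMap.range (scaleAdjoint w q)) := by
  refine finite_quotient_range_of_isDegreeRaising_sub_coeffScale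
    (isDegreeRaising_scaleAdjoint_sub_coeffScale w q) ?_
  exact (Polynomial.finite_setOfPred_isRoot
    (map_constantCoeff_ne_zero_of_isPrimitive hq)).preimage hw.injOn

theorem derivative_mul_single_one (f : LaurentSeries R) :
    LaurentSeries.derivative R (f * HahnSeries.single 1 1) =
      coeffScale (fun j => (j : R) + 1) f := by
  ext j
  simp [LaurentSeries.hasseDeriv_coeff, HahnSeries.coeff_mul_single]

end LaurentSeries

section Adjoint

variable {R E M : Type*} [CommRing R] [AddCommGroup E] [Module (LaurentSeries R) E]
  [Module R E] [AddCommGroup M] [Module R M]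

theorem map_smul_iterate_eq_map_coeffScale_pow_smul {τ : E →ₗ[R] M} {θ : E → E} {w : ℤ → R}
    (hτ : ∀ (f : LaurentSeries R) e, τ (f • θ e) = τ (coeffScale w f • e))
    (f : LaurentSeries R) (e : E) (i : ℕ) :
    τ (f • θ^[i] e) = τ (coeffScale (w ^ i) f • e) := by
  induction i generalizing f with
  | zero => simp [coeffScale_one]
  | succ i ih =>
    rw [Function.iterate_succ_apply', hτ, ih, pow_succ, coeffScale_mul, Module.End.mul_apply]

theorem map_scaleAdjoint_smul {τ : E →ₗ[R] M} {θ : E → E} {w : ℤ → R}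
    (hτ : ∀ (f : LaurentSeries R) e, τ (f • θ e) = τ (coeffScale w f • e))
    (q : R⟦X⟧[X]) (g : LaurentSeries R) (e : E) :
    τ (scaleAdjoint w q g • e) =
      τ (g • ∑ i ∈ q.support, algebraMap R⟦X⟧ (LaurentSeries R) (q.coeff i) • θ^[i] e) := by
  simp_rw [scaleAdjoint_apply, Finset.sum_smul, Finset.smul_sum, map_sum, smul_smul,
    map_smul_iterate_eq_map_coeffScale_pow_smul hτ, mul_comm g]

end Adjoint

theorem finite_range_map_smul_of_adjoint {k E M : Type*} [Field k] [AddCommGroup E]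
    [Module (LaurentSeries k) E] [FiniteDimensional (LaurentSeries k) E] [Module k E]
    [IsScalarTower k (LaurentSeries k) E] [AddCommGroup M] [Module k M] {τ : E →ₗ[k] M}
    {θ : E → E} {w : ℤ → k} (hw : Function.Injective w)
    (hτ : ∀ (f : LaurentSeries k) e, τ (f • θ e) = τ (coeffScale w f • e)) (e : E) :
    Module.Finite k (LinearMap.range
      (τ ∘ₗ (LinearMap.toSpanSingleton (LaurentSeries k) E e).restrictScalars k)) := by
  obtain ⟨q, hq, hqe⟩ := exists_isPrimitive_sum_smul_eq_zero (R := k⟦X⟧) (K := LaurentSeries k)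
    fun i => θ^[i] e
  have := finite_quotient_range_scaleAdjoint hw hq
  have hker : LinearMap.range (scaleAdjoint w q) ≤ LinearMap.ker
      (τ ∘ₗ (LinearMap.toSpanSingleton (LaurentSeries k) E e).restrictScalars k) := by
    rintro _ ⟨g, rfl⟩
    change τ (scaleAdjoint w q g • e) = 0
    rw [map_scaleAdjoint_smul hτ, hqe, smul_zero, map_zero]
  rw [← Submodule.range_liftQ _ _ hker]
  exact Module.Finite.range _

theorem finite_of_finite_range_map_smul {k K E M : Type*} [Ring k] [Semiring K]
    [Module k K] [AddCommGroup E] [Module K E] [Module.Finite K E] [Module k E]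
    [IsScalarTower k K E] [AddCommGroup M] [Module k M] {τ : E →ₗ[k] M}
    (hτ : Function.Surjective τ)
    (hfin : ∀ e : E, Module.Finite k (LinearMap.range
      (τ ∘ₗ (LinearMap.toSpanSingleton K E e).restrictScalars k))) : Module.Finite k M := by
  obtain ⟨n, e, he⟩ := Module.Finite.exists_fin (R := K) (M := E)
  have htop : ⨆ i, LinearMap.range
      (τ ∘ₗ (LinearMap.toSpanSingleton K E (e i)).restrictScalars k) = ⊤ := by
    refine eq_top_iff.2 fun x _ => ?_
    obtain ⟨y, rfl⟩ := hτ x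
    obtain ⟨c, rfl⟩ : ∃ c : Fin n → K, ∑ i, c i • e i = y :=
      (Submodule.mem_span_range_iff_exists_fun K).1 (he ▸ Submodule.mem_top)
    rw [map_sum]
    exact sum_mem fun i _ => Submodule.mem_iSup_of_mem i ⟨c i, rfl⟩
  rw [Module.finite_def, ← htop]
  exact Submodule.fg_iSup _ fun i => Module.Finite.iff_fg.1 (hfin (e i))

/-- Let `(E, ∇)` be a flat connection on `F₁ = k((t))` (char k = 0), with `E`
finite-dimensional over `F₁`; `∇ : E → E ⊗ Ω¹ ≅ E` is `k`-linear and satisfies the Leibniz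
rule (after trivializing `Ω¹ = F₁·dt`). Then `coker ∇ = E/∇(E)` is a finite-dimensional
`k`-vector space. -/
theorem finiteDimensional_coker_of_connection
    (k : Type*) [Field k] [CharZero k]
    (E : Type*) [AddCommGroup E] [Module (LaurentSeries k) E]
    [FiniteDimensional (LaurentSeries k) E]
    [Module k E] [IsScalarTower k (LaurentSeries k) E]
    (D : E →ₗ[k] E)
    (leibniz : ∀ (f : LaurentSeries k) (e : E),
      D (f • e) = LaurentSeries.derivative k f • e + f • D e) :
    FiniteDimensional k (E ⧸ LinearMap.range D) := by
  let τ := (LinearMap.range D).mkQ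
  let t : LaurentSeries k := HahnSeries.single 1 1
  let w : ℤ → k := fun j => -((j : k) + 1)
  have hw : Function.Injective w := fun i j hij => by simpa [w] using hij
  have hadjoint (f : LaurentSeries k) (e : E) : τ (f • t • D e) = τ (coeffScale w f • e) := by
    have hexact : τ (D ((f * t) • e)) = 0 := by simp [τ]
    have hscale : coeffScale w f = -LaurentSeries.derivative k (f * t) := by
      rw [derivative_mul_single_one]
      ext j
      exact neg_mul _ _
    rw [leibniz, map_add, mul_smul] at hexact
    rw [hscale, neg_smul, map_neg]
    exact eq_neg_of_add_eq_zero_right hexact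
  exact finite_of_finite_range_map_smul (LinearMap.range D).mkQ_surjective
    (finite_range_map_smul_of_adjoint hw hadjoint)
end

section
/- Let (E, ∇) be a flat connection on F₁ = k((t)), char k = 0, and ∇^∨ the dual connection on E^∨ = Hom_{F₁}(E, F₁). Under the residue pairing identification of the topological k-dual of E with E^∨ ⊗ Ω¹, the kernel of ∇^∨ maps isomorphically onto a k-space dual to coker(∇); in particular dim_k coker(∇) = dim_k ker(∇^∨). -/
set_option maxHeartbeats 2000000
set_option synthInstance.maxHeartbeats 2000000

universe u v

/-!
Write `t` for the uniformizer. Integrating by parts, a `k`-linear functional `φ` on `E` killing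
the image of `∇` satisfies `φ (f • (t∇) v) = φ (-(t f)' • v)`. Finite dimensionality gives a
relation `∑ pᵢ • (t∇)ⁱ v = 0` with `pᵢ ∈ k[[t]]` not all divisible by `t`, so `φ (· • v)` vanishes
on the image of the adjoint operator `f ↦ ∑ Lⁱ (pᵢ f)`, `L f = -(t f)'`. In the monomial basis this
operator is triangular with diagonal entries the values of a nonzero polynomial at integers, hence
its image contains `t ^ N k[[t]]` for large `N`. So `φ` is automatically continuous, and therefore
the residue of a unique `ξ ∈ E^∨`; it kills the image of `∇` exactly when `∇^∨ ξ = 0`.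

For the dimensions, horizontal sections that are independent over `k` stay independent over
`k((t))`, so `ker ∇^∨` is finite dimensional and the duality is one of finite dimensional spaces.
-/

open Module
open HahnSeries (single coeff_single_mul coeff_single_of_ne)
open LaurentSeries (derivative)
open scoped LaurentSeries PowerSeries

section Connection

variable {k K M : Type*}

section Dual

variable [CommRing K] [AddCommGroup M] [Module K M]

/-- `D` is a connection on the `K`-module `M` over the derivation `δ` of `K`. Only the Leibniz rule
is recorded; additivity of `δ` and `D` is left to bundled maps. -/
def IsConnection (δ : K → K) (D : M → M) : Prop :=
  ∀ (f : K) (e : M), D (f • e) = δ f • e + f • D e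

/-- `D'` is the connection on the dual module for which the evaluation pairing is horizontal. -/
def IsDualConnection (δ : K → K) (D : M → M) (D' : Dual K M → Dual K M) : Prop :=
  ∀ (t : Dual K M) (s : M), δ (t s) = t (D s) + D' t s

theorem IsConnection.dual {δ : K → K} {D : M → M} {D' : Dual K M → Dual K M}
    (hD : IsConnection δ D) (hD' : IsDualConnection δ D D') : IsConnection δ D' := by
  intro f t
  ext s
  have h_smul_right := hD' t (f • s)
  have h_smul_left := hD' (f • t) s
  simp only [hD f s, map_add, map_smul, LinearMap.add_apply, LinearMap.smul_apply,
    smul_eq_mul] at h_smul_right h_smul_left ⊢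
  linear_combination h_smul_right - h_smul_left

end Dual

section Horizontal

variable [Field k] [Field K] [Module k K] [AddCommGroup M] [Module K M] [Module k M]
  [IsScalarTower k K M] {δ : K → K} {D : M →ₗ[k] M}

theorem IsConnection.linearIndependent_of_horizontal (hD : IsConnection δ D)
    (hδ : ∀ f, δ f = 0 → ∃ c : k, c • 1 = f) {ι : Type*} {v : ι → M}
    (hDv : ∀ i, D (v i) = 0) (hv : LinearIndependent k v) : LinearIndependent K v := by
  classical
  refine linearIndependent_iff_finset_linearIndependent.2 fun s => ?_
  change LinearIndepOn K v s
  induction s using Finset.induction_on with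
  | empty => simp
  | insert i s hi ih =>
    rw [Finset.coe_insert, linearIndepOn_insert (Finset.mem_coe.not.2 hi)]
    refine ⟨ih, fun hmem => ?_⟩
    obtain ⟨c, hc⟩ := (Submodule.mem_span_image_finset_iff_exists_fun K).1 hmem
    have hδc : ∑ j, δ (c j) • v j = 0 := by
      have := congrArg D hc
      simpa only [map_sum, hD (c _), hDv, smul_zero, add_zero] using this
    choose a ha using fun j => hδ (c j) (Fintype.linearIndependent_iff.1 ih _ hδc j)
    refine hv.notMem_span_image (Finset.mem_coe.not.2 hi)
      ((Submodule.mem_span_image_finset_iff_exists_fun k).2 ⟨a, ?_⟩)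
    simp only [← hc, ← ha, smul_one_smul]

theorem IsConnection.finite_ker [FiniteDimensional K M] (hD : IsConnection δ D)
    (hδ : ∀ f, δ f = 0 → ∃ c : k, c • 1 = f) : Module.Finite k (LinearMap.ker D) := by
  let b := Basis.ofVectorSpace k (LinearMap.ker D)
  have hb : LinearIndependent k fun i => (b i : M) :=
    b.linearIndependent.map' (LinearMap.ker D).subtype (Submodule.ker_subtype _)
  have := (hD.linearIndependent_of_horizontal hδ (fun i => (b i).2) hb).finite
  exact Module.Finite.of_basis b

end Horizontal

end Connection

section LinearAlgebra

theorem lift_rank_eq_of_equiv_dual {k : Type*} {V : Type u} {W : Type v} [Field k]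
    [AddCommMonoid V] [Module k V] [AddCommGroup W] [Module k W] [Module.Finite k V]
    (e : V ≃ₗ[k] Dual k W) :
    Cardinal.lift.{u} (Module.rank k W) = Cardinal.lift.{v} (Module.rank k V) := by
  have : Module.Finite k (Dual k W) := Module.Finite.equiv e
  have : Module.Finite k W := (Module.finite_dual_iff k).1 this
  simp only [← finrank_eq_rank, e.finrank_eq, Subspace.dual_finrank_eq, Cardinal.lift_natCast]

theorem exists_triangular_system_solution {R : Type*} [Ring R] (c : ℕ → ℕ → R)
    (hc : ∀ m, IsUnit (c m m)) (g : ℕ → R) :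
    ∃ f : ℕ → R, ∀ m, ∑ l ∈ Finset.range (m + 1), c m l * f l = g m := by
  let f : ℕ → R := fun m => Nat.strongRecOn (motive := fun _ => R) m fun m ih =>
    ↑(hc m).unit⁻¹ * (g m - ∑ l : Fin m, c m l * ih l l.2)
  have hf (m : ℕ) : f m = ↑(hc m).unit⁻¹ * (g m - ∑ l : Fin m, c m l * f l) := by
    simp only [f]
    rw [Nat.strongRecOn_eq]
  refine ⟨f, fun m => ?_⟩
  rw [Finset.sum_range_succ, hf m, Finset.sum_range, ← mul_assoc, IsUnit.mul_val_inv, one_mul,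
    add_sub_cancel]

theorem exists_integral_relation {A K M ι : Type*} [CommRing A] [IsDomain A] [ValuationRing A]
    [Field K] [Algebra A K] [IsFractionRing A K] [AddCommGroup M] [Module K M] [Fintype ι]
    {v : ι → M} (hv : ¬ LinearIndependent K v) :
    ∃ p : ι → A, (∃ i, p i = 1) ∧ ∑ i, algebraMap A K (p i) • v i = 0 := by
  obtain ⟨b, hb, i₀, hi₀⟩ := Fintype.not_linearIndependent_iff.1 hv
  let ν := ValuationRing.valuation A K
  obtain ⟨i, -, hmax⟩ := Finset.exists_max_image Finset.univ (fun j => ν (b j)) ⟨i₀, by simp⟩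
  have hi : b i ≠ 0 := by
    intro h
    have := hmax i₀ (Finset.mem_univ _)
    rw [h, map_zero, le_zero_iff, map_eq_zero] at this
    exact hi₀ this
  have hint (j : ι) : ∃ a : A, algebraMap A K a = b j / b i := by
    rw [← ValuationRing.mem_integer_iff, Valuation.mem_integer_iff, map_div₀]
    exact div_le_one_of_le₀ (hmax j (Finset.mem_univ _)) zero_le
  choose p hp using hint
  refine ⟨p, ⟨i, IsFractionRing.injective A K ?_⟩, ?_⟩
  · rw [hp, div_self hi, map_one]
  · simp only [hp, div_eq_inv_mul, mul_smul, ← Finset.smul_sum, hb, smul_zero]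

theorem exists_forall_ge_sum_mul_pow_ne_zero {k : Type*} [Field k] [CharZero k] {n : ℕ}
    {a : Fin n → k} (ha : ∃ i, a i ≠ 0) :
    ∃ N : ℤ, ∀ j ≥ N, ∑ i : Fin n, a i * (-((j : k) + 1)) ^ (i : ℕ) ≠ 0 := by
  let q : Polynomial k := ∑ i : Fin n, Polynomial.monomial (i : ℕ) (a i)
  have hq : q ≠ 0 := by
    obtain ⟨i, hi⟩ := ha
    refine fun h => hi ?_
    simpa [q, Polynomial.finsetSum_coeff, Polynomial.coeff_monomial, Fin.val_inj]
      using congrArg (Polynomial.coeff · i) h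
  have hinj : Function.Injective fun j : ℤ => -((j : k) + 1) := fun i j hij => by simpa using hij
  obtain ⟨N, hN⟩ := ((Polynomial.finite_setOfPred_isRoot hq).preimage hinj.injOn).bddAbove
  refine ⟨N + 1, fun j hj h => ?_⟩
  have hroot : q.IsRoot (-((j : k) + 1)) := by
    simpa only [q, Polynomial.IsRoot, Polynomial.eval_finsetSum, Polynomial.eval_monomial] using h
  have : j ≤ N := hN hroot
  omega

end LinearAlgebra

namespace LaurentConnection

section Residue

variable {R : Type*} [CommRing R]

-- The instance found for `R` acting on `R⸨X⸩` is coefficientwise and not reducibly equal to the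
-- one of the algebra structure, so the compatibilities below are not found by synthesis.
instance : IsScalarTower R R⸨X⸩ R⸨X⸩ :=
  ⟨fun c f g => by simp only [← HahnSeries.C_mul_eq_smul, smul_eq_mul, mul_assoc]⟩

instance : SMulCommClass R⸨X⸩ R R⸨X⸩ :=
  ⟨fun f c g => by simp only [← HahnSeries.C_mul_eq_smul, smul_eq_mul, mul_left_comm]⟩

theorem coeff_derivative (f : R⸨X⸩) (j : ℤ) :
    (derivative R f).coeff j = ((j : R) + 1) * f.coeff (j + 1) := by
  simp [LaurentSeries.derivative_apply, zsmul_eq_mul]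

theorem exists_smul_one_eq_of_derivative_eq_zero {k : Type*} [Field k] [CharZero k]
    {f : k⸨X⸩} (hf : derivative k f = 0) :
    ∃ c : k, c • 1 = f := by
  refine ⟨f.coeff 0, ?_⟩
  ext j
  rcases eq_or_ne j 0 with rfl | hj
  · simp
  · have h := coeff_derivative f (j - 1)
    rw [hf, HahnSeries.coeff_zero, sub_add_cancel, Int.cast_sub, Int.cast_one, sub_add_cancel,
      eq_comm, mul_eq_zero_iff_left (Int.cast_ne_zero.2 hj)] at h
    simp [h, HahnSeries.coeff_one, hj]

/-- The residue of the differential form `f dt`. -/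
def residue : R⸨X⸩ →ₗ[R] R where
  toFun f := f.coeff (-1)
  map_add' _ _ := rfl
  map_smul' _ _ := rfl

theorem residue_apply (f : R⸨X⸩) : residue f = f.coeff (-1) := rfl

theorem residue_derivative (f : R⸨X⸩) : residue (derivative R f) = 0 := by
  simp [residue_apply]

theorem residue_single_mul (j : ℤ) (g : R⸨X⸩) : residue (single (-1 - j) 1 * g) = g.coeff j := by
  simp [residue_apply, coeff_single_mul]

theorem eq_of_residue_mul_eq {g g' : R⸨X⸩} (h : ∀ f, residue (f * g) = residue (f * g')) :
    g = g' := by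
  ext j
  rw [← residue_single_mul, h, residue_single_mul]

/-- The lattice `t ^ N R[[t]]` in `R((t))`. -/
def powerLattice (R : Type*) [CommRing R] (N : ℤ) : Submodule R R⸨X⸩ where
  carrier := {f | ∀ j < N, f.coeff j = 0}
  zero_mem' _ _ := rfl
  add_mem' hf hg j hj := by simp [hf j hj, hg j hj]
  smul_mem' c f hf j hj := by simp [hf j hj]

theorem residue_mul_eq_zero {N : ℤ} {f g : R⸨X⸩} (hf : f ∈ powerLattice R N)
    (hg : g ∈ powerLattice R (-N)) : residue (f * g) = 0 := by
  rw [residue_apply, HahnSeries.coeff_mul]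
  refine Finset.sum_eq_zero fun ij hij => ?_
  obtain ⟨-, -, hsum⟩ := Finset.mem_antidiagonal.1 hij
  rcases lt_or_ge ij.1 N with h | h
  · rw [hf _ h, zero_mul]
  · rw [hg ij.2 (by omega), mul_zero]

theorem single_mem_powerLattice {N j : ℤ} (hj : N ≤ j) (c : R) :
    single j c ∈ powerLattice R N :=
  fun _ hi => coeff_single_of_ne (by omega)

theorem sub_sum_single_mem_powerLattice (f : R⸨X⸩) (N : ℤ) :
    f - ∑ j ∈ Finset.Ico f.order N, f.coeff j • single j 1 ∈ powerLattice R N := by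
  intro i hi
  rcases lt_or_ge i f.order with h | h
  · simp [HahnSeries.coeff_sum, HahnSeries.coeff_single, HahnSeries.coeff_eq_zero_of_lt_order h]
  · simp [HahnSeries.coeff_sum, HahnSeries.coeff_single, h, hi]

theorem functional_ext {V : Type*} [AddCommGroup V] [Module R V] {ψ χ : R⸨X⸩ →ₗ[R] V} {N : ℤ}
    (hlattice : ∀ f ∈ powerLattice R N, ψ f = χ f)
    (hsingle : ∀ j, ψ (single j 1) = χ (single j 1)) : ψ = χ := by
  ext f
  have := hlattice _ (sub_sum_single_mem_powerLattice f N)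
  simpa only [map_sub, map_sum, map_smul, hsingle, sub_left_inj] using this

theorem exists_eq_residue_mul {ψ : R⸨X⸩ →ₗ[R] R} {N : ℤ} (hψ : ∀ f ∈ powerLattice R N, ψ f = 0) :
    ∃ g, ∀ f, ψ f = residue (f * g) := by
  have hvanish (j : ℤ) (hj : j < -N) : ψ (single (-1 - j) 1) = 0 :=
    hψ _ (single_mem_powerLattice (by omega) _)
  let g : R⸨X⸩ := HahnSeries.ofSuppBddBelow (fun j => ψ (single (-1 - j) 1))
    ⟨-N, fun j hj => not_lt.1 fun h => hj (hvanish j h)⟩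
  have hg : g ∈ powerLattice R (-N) := hvanish
  have key : ψ = residue ∘ₗ LinearMap.mulRight R g := by
    refine functional_ext (N := N) (fun f hf => ?_) fun j => ?_
    · exact (hψ f hf).trans (residue_mul_eq_zero hf hg).symm
    · obtain ⟨i, rfl⟩ : ∃ i, j = -1 - i := ⟨-1 - j, by omega⟩
      exact (residue_single_mul i g).symm
  exact ⟨g, LinearMap.congr_fun key⟩

end Residue

section ResidueDual

variable {R E : Type*} [CommRing R] [AddCommGroup E] [Module R⸨X⸩ E] [Module R E]
  [IsScalarTower R R⸨X⸩ E]

/-- The residue pairing, as the map from `E^∨ ≅ E^∨ ⊗ Ω¹` to the `R`-linear dual of `E`. -/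
noncomputable def residueDual : Dual R⸨X⸩ E →ₗ[R] Dual R E where
  toFun t := residue ∘ₗ t.restrictScalars R
  map_add' _ _ := rfl
  map_smul' _ _ := rfl

theorem residueDual_apply (t : Dual R⸨X⸩ E) (s : E) : residueDual t s = residue (t s) := rfl

theorem residueDual_injective : Function.Injective (residueDual (R := R) (E := E)) := by
  intro t t' h
  ext1 s
  refine eq_of_residue_mul_eq fun f => ?_
  simpa only [residueDual_apply, map_smul, smul_eq_mul] using LinearMap.congr_fun h (f • s)

theorem residueDual_mem_dualAnnihilator_range_iff {D : E →ₗ[R] E}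
    {D' : Dual R⸨X⸩ E → Dual R⸨X⸩ E} (hD' : IsDualConnection (derivative R (V := R)) D D')
    (t : Dual R⸨X⸩ E) : residueDual t ∈ (LinearMap.range D).dualAnnihilator ↔ D' t = 0 := by
  have by_parts (s : E) : residueDual t (D s) = -residueDual (D' t) s := by
    rw [eq_neg_iff_add_eq_zero, residueDual_apply, residueDual_apply, ← map_add, ← hD' t s,
      residue_derivative]
  rw [Submodule.mem_dualAnnihilator, ← map_eq_zero_iff _ residueDual_injective]
  simp [by_parts, LinearMap.ext_iff]

/-- Continuity of a functional for the discrete topology on `R` and the `t`-adic topology on `E`,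
for finite dimensional `E`: along each line of `E` it kills a lattice. -/
def IsTAdicContinuous (φ : Dual R E) : Prop :=
  ∀ v : E, ∃ N : ℤ, ∀ f ∈ powerLattice R N, φ (f • v) = 0

theorem IsTAdicContinuous.exists_residueDual_eq {φ : Dual R E} (hφ : IsTAdicContinuous φ) :
    ∃ t, residueDual t = φ := by
  have represent (v : E) : ∃ g : R⸨X⸩, ∀ f : R⸨X⸩, φ (f • v) = residue (f * g) := by
    obtain ⟨N, hN⟩ := hφ v
    exact exists_eq_residue_mul
      (ψ := φ ∘ₗ (LinearMap.toSpanSingleton R⸨X⸩ E v).restrictScalars R) hN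
  choose g hg using represent
  let t : Dual R⸨X⸩ E :=
    { toFun := g
      map_add' := fun v w => eq_of_residue_mul_eq fun f => by
        rw [← hg, smul_add, map_add, hg, hg, mul_add, map_add]
      map_smul' := fun c v => eq_of_residue_mul_eq fun f => by
        rw [← hg, smul_smul, hg, RingHom.id_apply, smul_eq_mul, mul_assoc] }
  refine ⟨t, LinearMap.ext fun s => ?_⟩
  have := hg s 1
  rw [one_smul, one_mul] at this
  exact this.symm

end ResidueDual

section EulerAdjoint

variable {R : Type*} [CommRing R]

/-- The formal adjoint `f ↦ -(t f)'` of the Euler operator `t d/dt` under the residue pairing. -/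
noncomputable def eulerAdjoint (f : R⸨X⸩) : R⸨X⸩ :=
  -derivative R (f * single 1 1)

theorem coeff_iterate_eulerAdjoint (i : ℕ) (f : R⸨X⸩) (j : ℤ) :
    (eulerAdjoint^[i] f).coeff j = (-((j : R) + 1)) ^ i * f.coeff j := by
  induction i with
  | zero => simp
  | succ i ih =>
    rw [Function.iterate_succ_apply', eulerAdjoint, HahnSeries.coeff_neg, coeff_derivative,
      HahnSeries.coeff_mul_single, mul_one, add_sub_cancel_right, ih, pow_succ']
    ring

theorem coeff_single_mul_coe (N : ℤ) (h : R⟦X⟧) (m : ℕ) :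
    (single N 1 * (h : R⸨X⸩)).coeff (N + m) = PowerSeries.coeff m h := by
  rw [coeff_single_mul, one_mul, add_sub_cancel_left, LaurentSeries.coeff_coe_powerSeries]

theorem single_mul_coe_mem_powerLattice (N : ℤ) (h : R⟦X⟧) :
    single N 1 * (h : R⸨X⸩) ∈ powerLattice R N := by
  intro j hj
  rw [coeff_single_mul, one_mul, PowerSeries.coeff_coe, if_pos (sub_neg.2 hj)]

theorem powerLattice_ext {N : ℤ} {f g : R⸨X⸩} (hf : f ∈ powerLattice R N)
    (hg : g ∈ powerLattice R N) (h : ∀ m : ℕ, f.coeff (N + m) = g.coeff (N + m)) : f = g := by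
  ext j
  rcases lt_or_ge j N with hj | hj
  · rw [hf j hj, hg j hj]
  · obtain ⟨m, rfl⟩ := Int.le.dest hj
    exact h m

theorem coeff_iterate_eulerAdjoint_mul (i : ℕ) (p : R⟦X⟧) (N : ℤ) (f : ℕ → R) (m : ℕ) :
    (eulerAdjoint^[i] ((p : R⸨X⸩) * (single N 1 * (PowerSeries.mk f : R⸨X⸩)))).coeff (N + m) =
      ∑ l ∈ Finset.range (m + 1),
        PowerSeries.coeff (m - l) p * (-(((N + m : ℤ) : R) + 1)) ^ i * f l := by
  rw [coeff_iterate_eulerAdjoint, mul_left_comm, ← PowerSeries.coe_mul, coeff_single_mul_coe,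
    mul_comm p, PowerSeries.coeff_mul, Finset.Nat.sum_antidiagonal_eq_sum_range_succ_mk,
    Finset.mul_sum]
  refine Finset.sum_congr rfl fun l _ => ?_
  rw [PowerSeries.coeff_mk]
  ring

theorem iterate_eulerAdjoint_mul_mem_powerLattice (i : ℕ) (p : R⟦X⟧) {N : ℤ} (h : R⟦X⟧) :
    eulerAdjoint^[i] ((p : R⸨X⸩) * (single N 1 * (h : R⸨X⸩))) ∈ powerLattice R N := by
  intro j hj
  rw [coeff_iterate_eulerAdjoint, mul_left_comm, ← PowerSeries.coe_mul,
    single_mul_coe_mem_powerLattice N _ j hj, mul_zero]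

theorem exists_sum_iterate_eulerAdjoint_eq {k : Type*} [Field k] [CharZero k] {n : ℕ}
    {p : Fin n → k⟦X⟧} (hp : ∃ i, PowerSeries.coeff 0 (p i) ≠ 0) :
    ∃ N : ℤ, ∀ g ∈ powerLattice k N, ∃ f : k⸨X⸩,
      ∑ i : Fin n, eulerAdjoint^[i] ((p i : k⸨X⸩) * f) = g := by
  obtain ⟨N, hN⟩ := exists_forall_ge_sum_mul_pow_ne_zero hp
  refine ⟨N, fun g hg => ?_⟩
  let c (m l : ℕ) : k :=
    ∑ i : Fin n, PowerSeries.coeff (m - l) (p i) * (-(((N + m : ℤ) : k) + 1)) ^ (i : ℕ)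
  have hc (m : ℕ) : IsUnit (c m m) := by
    simpa only [c, Nat.sub_self] using (hN (N + m) (by omega)).isUnit
  obtain ⟨f, hf⟩ := exists_triangular_system_solution c hc fun m => g.coeff (N + m)
  refine ⟨single N 1 * (PowerSeries.mk f : k⸨X⸩), powerLattice_ext
    (Submodule.sum_mem _ fun i _ => iterate_eulerAdjoint_mul_mem_powerLattice _ _ _) hg
    fun m => ?_⟩
  simp only [← hf m, HahnSeries.coeff_sum, coeff_iterate_eulerAdjoint_mul, c, Finset.sum_mul]
  exact Finset.sum_comm

end EulerAdjoint

section AutomaticContinuity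

theorem apply_smul_iterate_euler {R E : Type*} [CommRing R] [AddCommGroup E] [Module R⸨X⸩ E]
    [Module R E] {D : E →ₗ[R] E} (hD : IsConnection (derivative R (V := R)) D) {φ : Dual R E}
    (hφ : φ ∈ (LinearMap.range D).dualAnnihilator) (f : R⸨X⸩) (i : ℕ) (v : E) :
    φ (f • (fun w => (single 1 1 : R⸨X⸩) • D w)^[i] v) = φ (eulerAdjoint^[i] f • v) := by
  induction i generalizing v with
  | zero => rfl
  | succ i ih =>
    rw [Function.iterate_succ_apply, ih, Function.iterate_succ_apply']
    set g := eulerAdjoint^[i] f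
    have h : φ (D ((g * single 1 1) • v)) = 0 :=
      (Submodule.mem_dualAnnihilator φ).1 hφ _ (LinearMap.mem_range_self D _)
    rw [hD, map_add, mul_smul, add_eq_zero_iff_neg_eq, ← map_neg, ← neg_smul] at h
    exact h.symm

theorem isTAdicContinuous_of_mem_dualAnnihilator_range {k E : Type*} [Field k] [CharZero k]
    [AddCommGroup E] [Module k⸨X⸩ E] [FiniteDimensional k⸨X⸩ E] [Module k E]
    {D : E →ₗ[k] E} (hD : IsConnection (derivative k (V := k)) D) {φ : Dual k E}
    (hφ : φ ∈ (LinearMap.range D).dualAnnihilator) : IsTAdicContinuous φ := by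
  intro v
  let θ : E → E := fun w => (single 1 1 : k⸨X⸩) • D w
  have hdep : ¬ LinearIndependent k⸨X⸩ fun i : Fin (finrank k⸨X⸩ E + 1) => θ^[i] v := by
    intro h
    simpa using h.fintype_card_le_finrank
  obtain ⟨p, ⟨i, hi⟩, hrel⟩ := exists_integral_relation (A := k⟦X⟧) hdep
  obtain ⟨N, hN⟩ := exists_sum_iterate_eulerAdjoint_eq (p := p) ⟨i, by simp [hi]⟩
  refine ⟨N, fun g hg => ?_⟩
  obtain ⟨f, rfl⟩ := hN g hg
  calc φ ((∑ i : Fin (finrank k⸨X⸩ E + 1), eulerAdjoint^[i] ((p i : k⸨X⸩) * f)) • v)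
      = ∑ i : Fin (finrank k⸨X⸩ E + 1), φ (((p i : k⸨X⸩) * f) • θ^[i] v) := by
        simp only [Finset.sum_smul, map_sum, θ, apply_smul_iterate_euler hD hφ]
    _ = φ (f • ∑ i : Fin (finrank k⸨X⸩ E + 1), (p i : k⸨X⸩) • θ^[i] v) := by
        simp only [Finset.smul_sum, map_sum, smul_smul, mul_comm]
    _ = 0 := by rw [← LaurentSeries.coe_algebraMap, hrel, smul_zero, map_zero]

end AutomaticContinuity

section Duality

variable {k E : Type*} [Field k] [CharZero k] [AddCommGroup E] [Module k⸨X⸩ E]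
  [FiniteDimensional k⸨X⸩ E] [Module k E] [IsScalarTower k k⸨X⸩ E]
  {D : E →ₗ[k] E} {D' : Dual k⸨X⸩ E →ₗ[k] Dual k⸨X⸩ E}

theorem map_residueDual_ker
    (hD : IsConnection (derivative k (V := k)) D)
    (hD' : IsDualConnection (derivative k (V := k)) D D') :
    (LinearMap.ker D').map residueDual = (LinearMap.range D).dualAnnihilator := by
  ext φ
  constructor
  · rintro ⟨t, ht, rfl⟩
    exact (residueDual_mem_dualAnnihilator_range_iff hD' t).2 ht
  · intro hφ
    obtain ⟨t, rfl⟩ :=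
      (isTAdicContinuous_of_mem_dualAnnihilator_range hD hφ).exists_residueDual_eq
    exact ⟨t, (residueDual_mem_dualAnnihilator_range_iff hD' t).1 hφ, rfl⟩

/-- The isomorphism of `ker ∇^∨` with the dual of `coker ∇` induced by the residue pairing. -/
noncomputable def kerEquivDualCoker
    (hD : IsConnection (derivative k (V := k)) D)
    (hD' : IsDualConnection (derivative k (V := k)) D D') :
    LinearMap.ker D' ≃ₗ[k] Dual k (E ⧸ LinearMap.range D) :=
  (Submodule.equivMapOfInjective residueDual residueDual_injective (LinearMap.ker D')).trans <|
    (LinearEquiv.ofEq _ _ (map_residueDual_ker hD hD')).trans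
      (LinearMap.range D).dualQuotEquivDualAnnihilator.symm

theorem kerEquivDualCoker_apply_mk
    (hD : IsConnection (derivative k (V := k)) D)
    (hD' : IsDualConnection (derivative k (V := k)) D D')
    (t : LinearMap.ker D') (s : E) :
    kerEquivDualCoker hD hD' t (Submodule.Quotient.mk s) = ((t : Dual k⸨X⸩ E) s).coeff (-1) :=
  rfl

end Duality

end LaurentConnection

/-- Let `(E, ∇)` be a flat connection on `F₁ = k((t))` (char k = 0) and `∇^∨`
the dual connection on `E^∨ = Hom_{F₁}(E, F₁)`, characterized by
`⟨s,t⟩' = ⟨∇s, t⟩ + ⟨s, ∇^∨ t⟩`.  Under the residue pairing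
`Res(f) = coefficient of t⁻¹ in f` (identifying the topological `k`-dual of `E` with
`E^∨ ⊗ Ω¹`), the kernel of `∇^∨` maps isomorphically onto the `k`-dual of `coker ∇`;
in particular `dim_k coker(∇) = dim_k ker(∇^∨)`. -/
theorem ker_dual_connection_dual_to_coker
    (k : Type u) [Field k] [CharZero k]
    (E : Type v) [AddCommGroup E] [Module (LaurentSeries k) E]
    [FiniteDimensional (LaurentSeries k) E]
    [Module k E] [IsScalarTower k (LaurentSeries k) E]
    [SMulCommClass (LaurentSeries k) k (LaurentSeries k)]
    (D : E →ₗ[k] E)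
    (leibniz : ∀ (f : LaurentSeries k) (e : E),
      D (f • e) = LaurentSeries.derivative k f • e + f • D e)
    (Dd : Module.Dual (LaurentSeries k) E →ₗ[k] Module.Dual (LaurentSeries k) E)
    (dual_rule : ∀ (t : Module.Dual (LaurentSeries k) E) (s : E),
      LaurentSeries.derivative k (t s) = t (D s) + (Dd t) s) :
    ∃ Φ : ↥(LinearMap.ker Dd) ≃ₗ[k] Module.Dual k (E ⧸ LinearMap.range D),
      (∀ (t : ↥(LinearMap.ker Dd)) (s : E),
        Φ t (Submodule.Quotient.mk s) =
          ((t : Module.Dual (LaurentSeries k) E) s).coeff (-1)) ∧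
      Cardinal.lift.{max u v} (Module.rank k (E ⧸ LinearMap.range D)) =
        Cardinal.lift.{v} (Module.rank k ↥(LinearMap.ker Dd)) := by
  have hD : IsConnection (derivative k) D := leibniz
  have hDd : IsDualConnection (derivative k) D Dd := dual_rule
  have : Module.Finite k (LinearMap.ker Dd) := (hD.dual hDd).finite_ker fun _ =>
    LaurentConnection.exists_smul_one_eq_of_derivative_eq_zero
  let Φ := LaurentConnection.kerEquivDualCoker hD hDd
  exact ⟨Φ, LaurentConnection.kerEquivDualCoker_apply_mk hD hDd, lift_rank_eq_of_equiv_dual Φ⟩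
end
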